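/- Let G be a finitely generated group with finite generating set X whose growth function g_G^X(n) is bounded above by a polynomial in n. Then for every polynomial t(n) there exists a context-free language (namely the word problem W(F₂) of the free group of rank 2) that is not recognized by any weakly t(n) time-bounded G-automaton; that is, CF is not contained in 𝔏(G)^w_{t(n)}. -/

import Mathlib

/-- A `G`-automaton over input alphabet `α`: a nondeterministic finite automaton
equipped with a register holding an element of the group `G`. -/
structure GAutomaton (α : Type*) (G : Type*) [Group G] where
  /-- the (finite) state set -/
  Q : Type
  finQ : Finite Q
  /-- the initial state -/
  q0 : Q
  /-- the accepting states -/
  acc : Set Q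
  /-- the (finite) transition relation; `none` stands for ε -/
  δ : Set (Q × Option α × Q × G)
  finδ : δ.Finite

namespace GAutomaton

variable {α : Type*} {G : Type*} [Group G]

/-- One computation step between configurations `(state, register, remaining input)`. -/
def Step (M : GAutomaton α G) (c c' : M.Q × G × List α) : Prop :=
  ∃ σ m, (c.1, σ, c'.1, m) ∈ M.δ ∧ c'.2.1 = c.2.1 * m ∧
    match σ with
    | none => c'.2.2 = c.2.2
    | some s => c.2.2 = s :: c'.2.2

/-- `M.StepsIn k c c'` : configuration `c'` is reachable from `c` in exactly `k` steps. -/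
def StepsIn (M : GAutomaton α G) : ℕ → (M.Q × G × List α) → (M.Q × G × List α) → Prop
  | 0, c, c' => c = c'
  | n + 1, c, c' => ∃ d, M.Step c d ∧ M.StepsIn n d c'

/-- `M` accepts the word `w` within `t` computation steps. -/
def AcceptsIn (M : GAutomaton α G) (w : List α) (t : ℕ) : Prop :=
  ∃ k ≤ t, ∃ q ∈ M.acc, M.StepsIn k (M.q0, 1, w) (q, 1, [])

/-- The language recognized by `M`. -/
def lang (M : GAutomaton α G) : Language α := {w | ∃ t, M.AcceptsIn w t}

/-- `M` is real-time if every transition consumes an input symbol. -/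
def RealTime (M : GAutomaton α G) : Prop := ∀ tr ∈ M.δ, tr.2.1 ≠ none

end GAutomaton

/-- `L ∈ 𝔏(G)` : the language `L` is recognized by some `G`-automaton. -/
def GRecognizable (G : Type*) [Group G] {α : Type*} (L : Language α) : Prop :=
  ∃ M : GAutomaton α G, M.lang = L

/-- `L ∈ 𝔏(G)ʷ_{t(n)}` : `L` is recognized by a weakly `t(n)` time-bounded `G`-automaton. -/
def GRecognizableInTime (G : Type*) [Group G] {α : Type*} (L : Language α) (t : ℕ → ℕ) : Prop :=
  ∃ M : GAutomaton α G, M.lang = L ∧ ∀ w ∈ L, M.AcceptsIn w (t w.length)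

/-- `L ∈ 𝔏(G)ʷ_{O(n)}` : `L` is recognized by a weakly linear-time bounded `G`-automaton. -/
def GRecognizableLinTime (G : Type*) [Group G] {α : Type*} (L : Language α) : Prop :=
  ∃ C : ℕ, GRecognizableInTime G L (fun n => C * n + C)

/-- Evaluation in `G` of a word over the alphabet `X ∪ X⁻¹`, encoded as `↥X × Bool`
(`(x, false)` stands for the generator `x` and `(x, true)` for its inverse `x⁻¹`). -/
def wordEval {G : Type*} [Group G] (X : Finset G) (w : List (↥X × Bool)) : G :=
  (w.map fun p => if p.2 then (p.1 : G)⁻¹ else (p.1 : G)).prod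

/-- The word problem language `W(G,X)` over the alphabet `X ∪ X⁻¹`: all words whose
product in `G` is the identity. -/
def wordProblem {G : Type*} [Group G] (X : Finset G) : Language (↥X × Bool) :=
  {w | wordEval X w = 1}

/-- The growth function `g_G^X(n)` of `G` with respect to `X`: the number of group
elements of word length at most `n`. -/
noncomputable def growthFn {G : Type*} [Group G] (X : Finset G) (n : ℕ) : ℕ :=
  Nat.card {g : G // ∃ w : List (↥X × Bool), w.length ≤ n ∧ wordEval X w = g}

/-- The word problem `W(F₂)` of the free group of rank 2, over the four-letter alphabet
`Fin 2 × Bool` of the two generators and their inverses. -/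
def wordProblemF2 : Language (Fin 2 × Bool) :=
  {w | (w.map fun p =>
    if p.2 then (FreeGroup.of p.1)⁻¹ else FreeGroup.of p.1).prod = 1}

/-! Fix an automaton recognizing the word problem in time `t`. Cut an accepting computation on
`u ++ u⁻¹` after `u` has been read: the state and the register value at the cut determine the
element of the free group spelled by `u`, since swapping the second halves of two computations with
the same configuration at the cut gives another accepting computation. The register value at the
cut lies in a ball of radius linear in the running time. Hence the `bⁿ` positive words of length `n`
over `b` letters inject into a set whose size is bounded by a polynomial in `n`, which is impossible
for `b ≥ 2`.

The word problem is context-free since a free reduction to the empty word, read backwards, inserts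
pairs `x x⁻¹`, which a grammar can do wherever it keeps a nonterminal. -/

/-! ### The two-sided Dyck language -/

section TwoSidedDyck

variable {α : Type*}

variable (α) in
/-- The two-sided Dyck language: the word problem of the free group on `α`. The letters are
encoded as for `FreeGroup.mk`, so `(a, true)` is the generator `a` and `(a, false)` its inverse. -/
def twoSidedDyck : Language (α × Bool) := {w | FreeGroup.mk w = 1}

lemma append_invRev_mem_twoSidedDyck {u v : List (α × Bool)} :
    u ++ FreeGroup.invRev v ∈ twoSidedDyck α ↔ FreeGroup.mk u = FreeGroup.mk v := by
  change FreeGroup.mk (u ++ FreeGroup.invRev v) = 1 ↔ _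
  rw [← FreeGroup.mul_mk, ← FreeGroup.inv_mk, mul_inv_eq_one]

lemma red_nil_of_mem_twoSidedDyck {w : List (α × Bool)} (hw : w ∈ twoSidedDyck α) :
    FreeGroup.Red w [] := by
  classical
  have hreduce : FreeGroup.reduce w = [] := FreeGroup.reduce.sound hw
  exact hreduce ▸ FreeGroup.reduce.red

-- Here a letter `(a, true)` evaluates to an inverse, the opposite of Mathlib's convention.
lemma lift_inv_mk {G : Type*} [Group G] (f : α → G) (w : List (α × Bool)) :
    FreeGroup.lift (fun a => (f a)⁻¹) (FreeGroup.mk w) =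
      (w.map fun p => if p.2 then (f p.1)⁻¹ else f p.1).prod := by
  simp [Bool.cond_eq_ite]

lemma lift_inv_of_injective :
    Function.Injective (FreeGroup.lift fun a : α => (FreeGroup.of a)⁻¹) := by
  set φ := FreeGroup.lift fun a : α => (FreeGroup.of a)⁻¹
  have hφ : φ.comp φ = MonoidHom.id _ := FreeGroup.ext_hom _ _ fun a => by simp [φ]
  exact Function.LeftInverse.injective (DFunLike.congr_fun hφ)

lemma wordProblemF2_eq_twoSidedDyck : wordProblemF2 = twoSidedDyck (Fin 2) := by
  ext w
  change (w.map fun p => if p.2 then (FreeGroup.of p.1)⁻¹ else FreeGroup.of p.1).prod = 1 ↔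
    FreeGroup.mk w = 1
  rw [← lift_inv_mk, map_eq_one_iff _ lift_inv_of_injective]

/-- The right-hand sides of the grammar for `twoSidedDyck α`: the empty word for `none`, and
`S x S x⁻¹ S` for each letter `x`. -/
def dyckOutput : Option (α × Bool) → List (Symbol (α × Bool) Unit)
  | none => []
  | some (a, b) =>
    [.nonterminal (), .terminal (a, b), .nonterminal (), .terminal (a, !b), .nonterminal ()]

variable (α) in
/-- The context-free grammar `S → ε | S x S x⁻¹ S` for `twoSidedDyck α`, with `Unit` as the type of
nonterminals. -/
noncomputable def dyckGrammar [Finite α] : ContextFreeGrammar (α × Bool) where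
  NT := Unit
  initial := ()
  rules := (Set.finite_range fun x : Option (α × Bool) => ⟨(), dyckOutput x⟩).toFinset

/-- The sentential form `S a₁ S a₂ ⋯ S aₙ S` of `dyckGrammar α`. Undoing a cancellation in
`a₁ a₂ ⋯ aₙ` amounts to one application of `S → S x S x⁻¹ S` to it. -/
def interleaved (w : List (α × Bool)) : List (Symbol (α × Bool) Unit) :=
  w.flatMap (fun a => [.nonterminal (), .terminal a]) ++ [.nonterminal ()]

/-- The value in the free group of a symbol of `dyckGrammar α`, the nonterminal having value `1`. -/
def symbolValue : Symbol (α × Bool) Unit → FreeGroup α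
  | .terminal a => FreeGroup.mk [a]
  | .nonterminal _ => 1

lemma prod_symbolValue_dyckOutput (x : Option (α × Bool)) :
    ((dyckOutput x).map symbolValue).prod = 1 := by
  rcases x with _ | ⟨a, b⟩
  · rfl
  · simpa [dyckOutput, symbolValue, FreeGroup.invRev] using mul_inv_cancel (FreeGroup.mk [(a, b)])

lemma prod_symbolValue_terminal (w : List (α × Bool)) :
    ((w.map Symbol.terminal).map symbolValue).prod = FreeGroup.mk w := by
  induction w with
  | nil => rfl
  | cons a w ih =>
    rw [List.map_cons, List.map_cons, List.prod_cons, ih]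
    rfl

section Grammar

variable [Finite α]

lemma mem_dyckGrammar_rules {r : ContextFreeRule (α × Bool) Unit} :
    r ∈ (dyckGrammar α).rules ↔ ∃ x, ⟨(), dyckOutput x⟩ = r :=
  Set.Finite.mem_toFinset _

lemma dyckGrammar_produces_iff {u v : List (Symbol (α × Bool) Unit)} :
    (dyckGrammar α).Produces u v ↔
      ∃ x p q, u = p ++ [.nonterminal ()] ++ q ∧ v = p ++ dyckOutput x ++ q := by
  constructor
  · rintro ⟨r, hr, hrew⟩
    obtain ⟨x, rfl⟩ := mem_dyckGrammar_rules.1 hr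
    exact ⟨x, hrew.exists_parts⟩
  · rintro ⟨x, hparts⟩
    exact ⟨_, mem_dyckGrammar_rules.2 ⟨x, rfl⟩, ContextFreeRule.rewrites_iff.2 hparts⟩

lemma prod_symbolValue_eq_of_derives {u v : List (Symbol (α × Bool) Unit)}
    (h : (dyckGrammar α).Derives u v) :
    (u.map symbolValue).prod = (v.map symbolValue).prod := by
  induction h with
  | refl => rfl
  | tail _ hstep ih =>
    obtain ⟨x, p, q, rfl, rfl⟩ := dyckGrammar_produces_iff.1 hstep
    rw [ih]
    simp [prod_symbolValue_dyckOutput, symbolValue]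

lemma derives_interleaved_of_redStep {w w' : List (α × Bool)} (h : FreeGroup.Red.Step w w') :
    (dyckGrammar α).Derives (interleaved w') (interleaved w) := by
  obtain @⟨l, r, a, b⟩ := h
  obtain ⟨p, hp⟩ : ∃ p, ∀ s, interleaved (l ++ s) = p ++ interleaved s :=
    ⟨l.flatMap fun c => [.nonterminal (), .terminal c], fun s => by simp [interleaved]⟩
  obtain ⟨q, hq⟩ : ∃ q, interleaved r = .nonterminal () :: q := by
    cases r <;> exact ⟨_, rfl⟩
  have hpair : interleaved ((a, b) :: (a, !b) :: r) = dyckOutput (some (a, b)) ++ q := by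
    simpa [interleaved, dyckOutput] using hq
  refine .single (dyckGrammar_produces_iff.2 ⟨some (a, b), p, q, ?_, ?_⟩)
  · rw [hp, hq, List.append_cons]
  · rw [hp, hpair, List.append_assoc]

lemma derives_interleaved_of_red {w w' : List (α × Bool)} (h : FreeGroup.Red w w') :
    (dyckGrammar α).Derives (interleaved w') (interleaved w) := by
  induction h with
  | refl => rfl
  | tail _ hstep ih => exact (derives_interleaved_of_redStep hstep).trans ih

lemma interleaved_derives_terminal (w : List (α × Bool)) :
    (dyckGrammar α).Derives (interleaved w) (w.map Symbol.terminal) := by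
  induction w with
  | nil => exact .single (dyckGrammar_produces_iff.2 ⟨none, [], [], rfl, rfl⟩)
  | cons a w ih =>
    exact .head (dyckGrammar_produces_iff.2 ⟨none, [], .terminal a :: interleaved w, rfl, rfl⟩)
      (ih.append_left [.terminal a])

theorem isContextFree_twoSidedDyck : (twoSidedDyck α).IsContextFree := by
  refine ⟨dyckGrammar α, Set.ext fun w => ⟨fun h => ?_, fun h => ?_⟩⟩
  · exact (prod_symbolValue_terminal w).symm.trans (prod_symbolValue_eq_of_derives h).symm
  · exact (derives_interleaved_of_red (red_nil_of_mem_twoSidedDyck h)).trans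
      (interleaved_derives_terminal w)

end Grammar

end TwoSidedDyck

/-! ### Fooling families -/

/-- A fooling family for `L`: pairs of words `(u i, v i)` such that `u i ++ v j` lies in `L`
exactly on the diagonal. -/
def IsFoolingFamily {ι β : Type*} (L : Language β) (u v : ι → List β) : Prop :=
  ∀ i j, u i ++ v j ∈ L ↔ i = j

lemma isFoolingFamily_twoSidedDyck {ι α : Type*} {u : ι → List (α × Bool)}
    (hu : ∀ i, FreeGroup.IsReduced (u i)) (hinj : Function.Injective u) :
    IsFoolingFamily (twoSidedDyck α) u fun i => FreeGroup.invRev (u i) := by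
  classical
  refine fun i j => append_invRev_mem_twoSidedDyck.trans ⟨fun h => hinj ?_, fun h => h ▸ rfl⟩
  rw [← (hu i).reduce_eq, ← (hu j).reduce_eq, FreeGroup.reduce.sound h]

lemma isReduced_map_prodMk {α : Type*} (l : List α) (b : Bool) :
    FreeGroup.IsReduced (l.map (·, b)) :=
  (List.isChain_map _).2 (List.Pairwise.isChain (List.pairwise_of_forall fun _ _ _ => rfl))

/-! ### Balls in a finitely generated group -/

section WordBall

variable {G : Type*} [Group G] {X : Finset G}

variable (X) in
/-- The ball of radius `n` around `1` in the word metric of `G` with respect to `X`; its cardinality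
is `growthFn X n`. -/
def wordBall (n : ℕ) : Set G :=
  {g | ∃ w : List (↥X × Bool), w.length ≤ n ∧ wordEval X w = g}

lemma wordBall_mono : Monotone (wordBall X) :=
  fun _ _ hmn _ ⟨w, hw, hg⟩ => ⟨w, hw.trans hmn, hg⟩

lemma one_mem_wordBall (n : ℕ) : (1 : G) ∈ wordBall X n :=
  ⟨[], n.zero_le, rfl⟩

lemma mul_mem_wordBall {m n : ℕ} {g h : G} (hg : g ∈ wordBall X m) (hh : h ∈ wordBall X n) :
    g * h ∈ wordBall X (m + n) := by
  obtain ⟨w, hw, rfl⟩ := hg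
  obtain ⟨w', hw', rfl⟩ := hh
  exact ⟨w ++ w', by grind, by simp [wordEval]⟩

lemma finite_wordBall (n : ℕ) : (wordBall X n).Finite :=
  (List.finite_length_le (↥X × Bool) n).image (wordEval X)

lemma wordEval_surjective (hX : Subgroup.closure (X : Set G) = ⊤) :
    Function.Surjective (wordEval X) := by
  have hlift : Function.Surjective (FreeGroup.lift fun x : X => (x : G)⁻¹) := by
    rw [FreeGroup.lift_surjective_iff_closure_range_eq_top, ← hX, ← Subgroup.closure_inv]
    congr 1
    ext g
    simp [inv_eq_iff_eq_inv]
  intro g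
  obtain ⟨⟨w⟩, rfl⟩ := hlift g
  exact ⟨w, (lift_inv_mk _ w).symm⟩

lemma exists_subset_wordBall (hX : Subgroup.closure (X : Set G) = ⊤) {S : Set G}
    (hS : S.Finite) : ∃ C, S ⊆ wordBall X C := by
  choose w hw using wordEval_surjective hX
  obtain ⟨C, hC⟩ := (hS.image fun g => (w g).length).bddAbove
  exact ⟨C, fun g hg => ⟨w g, hC ⟨g, hg, rfl⟩, hw g⟩⟩

end WordBall

/-! ### Computations of `G`-automata -/

namespace GAutomaton

variable {α G : Type*} [Group G] {M : GAutomaton α G}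

lemma Step.append_right {p q : M.Q} {g h : G} {u u' : List α}
    (hstep : M.Step (p, g, u) (q, h, u')) (v : List α) :
    M.Step (p, g, u ++ v) (q, h, u' ++ v) := by
  obtain ⟨σ, m, hδ, hm, hσ⟩ := hstep
  refine ⟨σ, m, hδ, hm, ?_⟩
  cases σ <;> simp_all

lemma Step.of_append {p q : M.Q} {g h : G} {u v y : List α}
    (hstep : M.Step (p, g, u ++ v) (q, h, y)) (hu : u ≠ []) :
    ∃ u', y = u' ++ v ∧ M.Step (p, g, u) (q, h, u') := by
  obtain ⟨σ, m, hδ, hm, hσ⟩ := hstep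
  obtain ⟨a, u, rfl⟩ := List.exists_cons_of_ne_nil hu
  cases σ with
  | none => exact ⟨a :: u, hσ, none, m, hδ, hm, rfl⟩
  | some s =>
    obtain ⟨rfl, rfl⟩ : a = s ∧ u ++ v = y := by simpa using hσ
    exact ⟨u, rfl, some a, m, hδ, hm, rfl⟩

lemma StepsIn.trans {i j : ℕ} {c d e : M.Q × G × List α}
    (h : M.StepsIn i c d) (h' : M.StepsIn j d e) : M.StepsIn (i + j) c e := by
  induction i generalizing c with
  | zero =>
    obtain rfl : c = d := h
    rwa [Nat.zero_add]
  | succ i ih =>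
    obtain ⟨c', hstep, hc'⟩ := h
    rw [Nat.succ_add]
    exact ⟨c', hstep, ih hc'⟩

lemma StepsIn.append_right {k : ℕ} {c d : M.Q × G × List α} (h : M.StepsIn k c d) (v : List α) :
    M.StepsIn k (c.1, c.2.1, c.2.2 ++ v) (d.1, d.2.1, d.2.2 ++ v) := by
  induction k generalizing c with
  | zero =>
    obtain rfl : c = d := h
    rfl
  | succ k ih =>
    obtain ⟨c', hstep, hc'⟩ := h
    exact ⟨_, hstep.append_right v, ih hc'⟩

lemma StepsIn.exists_of_append {k : ℕ} {p q : M.Q} {g h : G} {u v : List α}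
    (hsteps : M.StepsIn k (p, g, u ++ v) (q, h, [])) :
    ∃ i j r x, i + j = k ∧ M.StepsIn i (p, g, u) (r, x, []) ∧ M.StepsIn j (r, x, v) (q, h, []) := by
  induction k generalizing p g u with
  | zero =>
    obtain ⟨rfl, rfl, hnil⟩ : p = q ∧ g = h ∧ u ++ v = [] := by simpa [StepsIn] using hsteps
    obtain ⟨rfl, rfl⟩ := List.append_eq_nil_iff.1 hnil
    exact ⟨0, 0, p, g, rfl, rfl, rfl⟩
  | succ k ih =>
    rcases eq_or_ne u [] with rfl | hu
    · exact ⟨0, k + 1, p, g, Nat.zero_add _, rfl, hsteps⟩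
    obtain ⟨⟨p', g', y⟩, hstep, hrest⟩ := hsteps
    obtain ⟨u', rfl, hstep'⟩ := hstep.of_append hu
    obtain ⟨i, j, r, x, rfl, hi, hj⟩ := ih hrest
    exact ⟨i + 1, j, r, x, by omega, ⟨_, hstep', hi⟩, hj⟩

variable {X : Finset G} {C : ℕ}

lemma StepsIn.exists_register_eq_mul (hC : ∀ tr ∈ M.δ, tr.2.2.2 ∈ wordBall X C) {k : ℕ}
    {c d : M.Q × G × List α} (h : M.StepsIn k c d) :
    ∃ m ∈ wordBall X (C * k), d.2.1 = c.2.1 * m := by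
  induction k generalizing c with
  | zero =>
    obtain rfl : c = d := h
    exact ⟨1, one_mem_wordBall _, (mul_one _).symm⟩
  | succ k ih =>
    obtain ⟨c', ⟨σ, m, hδ, hm, -⟩, hc'⟩ := h
    obtain ⟨m', hm', hd⟩ := ih hc'
    refine ⟨m * m', ?_, by rw [hd, hm, mul_assoc]⟩
    rw [Nat.mul_succ, add_comm]
    exact mul_mem_wordBall (hC _ hδ) hm'

lemma append_mem_lang {i j : ℕ} {p q : M.Q} {g : G} {u v : List α} (hq : q ∈ M.acc)
    (hu : M.StepsIn i (M.q0, 1, u) (p, g, [])) (hv : M.StepsIn j (p, g, v) (q, 1, [])) :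
    u ++ v ∈ M.lang :=
  ⟨i + j, i + j, le_rfl, q, hq, (hu.append_right v).trans hv⟩

lemma AcceptsIn.exists_of_append (hC : ∀ tr ∈ M.δ, tr.2.2.2 ∈ wordBall X C) {T : ℕ}
    {u v : List α} (h : M.AcceptsIn (u ++ v) T) :
    ∃ p, ∃ g ∈ wordBall X (C * T), (∃ i, M.StepsIn i (M.q0, 1, u) (p, g, [])) ∧
      ∃ j, ∃ q ∈ M.acc, M.StepsIn j (p, g, v) (q, 1, []) := by
  obtain ⟨k, hk, q, hq, hsteps⟩ := h
  obtain ⟨i, j, p, g, rfl, hi, hj⟩ := hsteps.exists_of_append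
  obtain ⟨m, hm, rfl⟩ : ∃ m ∈ wordBall X (C * i), g = 1 * m := hi.exists_register_eq_mul hC
  rw [one_mul] at hi hj
  exact ⟨p, m, wordBall_mono (Nat.mul_le_mul_left C (by omega)) hm, ⟨i, hi⟩, j, q, hq, hj⟩

theorem card_le_mul_growthFn_of_isFoolingFamily (hC : ∀ tr ∈ M.δ, tr.2.2.2 ∈ wordBall X C)
    {ι : Type*} {u v : ι → List α} (huv : IsFoolingFamily M.lang u v) {T : ℕ}
    (hT : ∀ i, M.AcceptsIn (u i ++ v i) T) :
    Nat.card ι ≤ Nat.card M.Q * growthFn X (C * T) := by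
  choose p g hg hu hv using fun i => (hT i).exists_of_append hC
  let cut (i : ι) : M.Q × wordBall X (C * T) := (p i, ⟨g i, hg i⟩)
  have hcut : Function.Injective cut := by
    intro i j hij
    obtain ⟨hp, hg'⟩ : p i = p j ∧ g i = g j := by simpa [cut] using hij
    obtain ⟨k, hk⟩ := hu i
    obtain ⟨l, q, hq, hl⟩ := hv j
    rw [← hp, ← hg'] at hl
    exact (huv i j).1 (append_mem_lang hq hk hl)
  have := M.finQ
  have := (finite_wordBall (X := X) (C * T)).to_subtype
  calc Nat.card ι ≤ Nat.card (M.Q × wordBall X (C * T)) := Nat.card_le_card_of_injective cut hcut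
    _ = Nat.card M.Q * growthFn X (C * T) := Nat.card_prod _ _

end GAutomaton

theorem GRecognizableInTime.exists_card_pow_le_mul_growthFn {α G : Type*} [Group G] {X : Finset G}
    (hX : Subgroup.closure (X : Set G) = ⊤) {t : ℕ → ℕ}
    (h : GRecognizableInTime G (twoSidedDyck α) t) :
    ∃ s C : ℕ, ∀ n, Nat.card α ^ n ≤ s * growthFn X (C * t (2 * n)) := by
  obtain ⟨M, hlang, htime⟩ := h
  obtain ⟨C, hC⟩ := exists_subset_wordBall hX (M.finδ.image fun tr => tr.2.2.2)
  refine ⟨Nat.card M.Q, C, fun n => ?_⟩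
  let u (f : Fin n → α) : List (α × Bool) := (List.ofFn f).map (·, true)
  have hinj : Function.Injective u :=
    (List.map_injective_iff.2 (Prod.mk_left_injective true)).comp List.ofFn_injective
  have hfool := isFoolingFamily_twoSidedDyck (u := u) (fun _ => isReduced_map_prodMk _ true) hinj
  have hacc (f : Fin n → α) : M.AcceptsIn (u f ++ FreeGroup.invRev (u f)) (t (2 * n)) := by
    simpa [u, two_mul] using htime _ ((hfool f f).2 rfl)
  simpa [Nat.card_fun] using
    GAutomaton.card_le_mul_growthFn_of_isFoolingFamily (fun tr htr => hC ⟨tr, htr, rfl⟩)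
      (hlang ▸ hfool) hacc

/-! ### Polynomials against exponentials -/

open Asymptotics Filter in
lemma isLittleO_polynomial_eval_const_pow (P : Polynomial ℝ) {r : ℝ} (hr : 1 < r) :
    (fun n : ℕ => P.eval (n : ℝ)) =o[atTop] fun n : ℕ => r ^ n := by
  have hdeg : P.degree ≤ ((Polynomial.X : Polynomial ℝ) ^ P.natDegree).degree := by
    rw [Polynomial.degree_X_pow]
    exact Polynomial.degree_le_natDegree
  have hpow : (fun n : ℕ => P.eval (n : ℝ)) =O[atTop] fun n : ℕ => (n : ℝ) ^ P.natDegree := by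
    simpa [Function.comp_def] using
      (P.isBigO_atTop_of_degree_le _ hdeg).comp_tendsto tendsto_natCast_atTop_atTop
  exact hpow.trans_isLittleO (isLittleO_pow_const_const_pow_of_one_lt _ hr)

lemma exists_polynomial_eval_lt_pow (P : Polynomial ℕ) {b : ℕ} (hb : 1 < b) :
    ∃ n, P.eval n < b ^ n := by
  have hlittle := isLittleO_polynomial_eval_const_pow (P.map (Nat.castRingHom ℝ))
    (r := b) (mod_cast hb)
  obtain ⟨n, hn⟩ := (hlittle.def one_half_pos).exists
  have hpos : (0 : ℝ) < (b : ℝ) ^ n := by positivity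
  have hle : ((P.eval n : ℕ) : ℝ) ≤ 1 / 2 * (b : ℝ) ^ n := by
    simpa using hn
  exact ⟨n, mod_cast (by linarith : ((P.eval n : ℕ) : ℝ) < (b : ℝ) ^ n)⟩

theorem cf_not_subset_poly_growth_polytime_general {α G : Type*} [Finite α] [Nontrivial α]
    [Group G] (X : Finset G) (hX : Subgroup.closure (X : Set G) = ⊤)
    (hpoly : ∃ p : Polynomial ℕ, ∀ n, growthFn X n ≤ p.eval n) (t : Polynomial ℕ) :
    (twoSidedDyck α).IsContextFree ∧
    ¬ GRecognizableInTime G (twoSidedDyck α) (fun n => t.eval n) := by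
  refine ⟨isContextFree_twoSidedDyck, fun hrec => ?_⟩
  obtain ⟨p, hp⟩ := hpoly
  obtain ⟨s, C, hcard⟩ := hrec.exists_card_pow_le_mul_growthFn hX
  let bound : Polynomial ℕ := .C s * p.comp (.C C * t.comp (.C 2 * .X))
  obtain ⟨n, hn⟩ := exists_polynomial_eval_lt_pow bound (Finite.one_lt_card (α := α))
  refine hn.not_ge ?_
  calc Nat.card α ^ n ≤ s * growthFn X (C * t.eval (2 * n)) := hcard n
    _ ≤ s * p.eval (C * t.eval (2 * n)) := Nat.mul_le_mul_left s (hp _)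
    _ = bound.eval n := by simp [bound]

/-- If `G` is finitely generated with polynomially bounded growth, then
for every polynomial `t` there is a context-free language — namely `W(F₂)` — that is not
recognized by any weakly `t(n)` time-bounded `G`-automaton; hence `CF ⊄ 𝔏(G)ʷ_{t(n)}`. -/
theorem cf_not_subset_poly_growth_polytime
    {G : Type*} [Group G] (X : Finset G) (hX : Subgroup.closure (X : Set G) = ⊤)
    (hpoly : ∃ p : Polynomial ℕ, ∀ n, growthFn X n ≤ p.eval n)
    (t : Polynomial ℕ) :
    wordProblemF2.IsContextFree ∧
    ¬ GRecognizableInTime G wordProblemF2 (fun n => t.eval n) :=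
  wordProblemF2_eq_twoSidedDyck ▸ cf_not_subset_poly_growth_polytime_general X hX hpoly t
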